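/- For every τ ∈ ℍ and every z ∈ ℂ with z ∉ Λ_τ, the τ-derivative of the Weierstrass ℘-function satisfies ∂℘/∂τ(z|τ) = (−i/(4π))[2(ζ(z|τ) − zη₁(τ))℘′(z|τ) + 4(℘(z|τ) − η₁(τ))℘(z|τ) − (2/3)g₂(τ)]. -/

import Mathlib

open Complex Filter Topology Asymptotics

noncomputable section

/-- membership in the lattice `Λ_τ = ℤ + τℤ`. -/
def InLattice (τ z : ℂ) : Prop := ∃ m n : ℤ, z = (m : ℂ) + (n : ℂ) * τ

/-- the half-period generators `ω₀ = 0, ω₁ = 1, ω₂ = τ, ω₃ = 1 + τ`. -/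
def halfp (τ : ℂ) : Fin 4 → ℂ := ![0, 1, τ, 1 + τ]

/-- the Weierstrass elliptic function `℘(z|τ)`. -/
def wp (τ z : ℂ) : ℂ :=
  z⁻¹ ^ 2 + ∑' w : {w : ℤ × ℤ // w ≠ 0},
    ((z - ((w.1.1 : ℂ) + (w.1.2 : ℂ) * τ))⁻¹ ^ 2 - ((w.1.1 : ℂ) + (w.1.2 : ℂ) * τ)⁻¹ ^ 2)

/-- `℘′(z|τ)`, the `z`-derivative of `℘`. -/
def wpd (τ z : ℂ) : ℂ := deriv (wp τ) z

/-- `℘″(z|τ)`. -/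
def wpdd (τ z : ℂ) : ℂ := deriv (wpd τ) z

def e1 (τ : ℂ) : ℂ := wp τ (1 / 2)
def e2 (τ : ℂ) : ℂ := wp τ (τ / 2)
def e3 (τ : ℂ) : ℂ := wp τ ((1 + τ) / 2)

def g2 (τ : ℂ) : ℂ := -4 * (e1 τ * e2 τ + e1 τ * e3 τ + e2 τ * e3 τ)

/-- `zeta` is the Weierstrass zeta function: for each `τ ∈ ℍ`, `zeta τ` is odd, satisfies
`∂ζ/∂z = -℘` off the lattice, and `ζ(z|τ) - 1/z → 0` as `z → 0`. -/
def IsWeierstrassZeta (zeta : ℂ → ℂ → ℂ) : Prop :=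
  ∀ τ : ℂ, 0 < τ.im →
    (∀ z : ℂ, zeta τ (-z) = - zeta τ z) ∧
    (∀ z : ℂ, ¬ InLattice τ z → HasDerivAt (zeta τ) (- wp τ z) z) ∧
    Tendsto (fun z => zeta τ z - z⁻¹) (𝓝[≠] (0 : ℂ)) (𝓝 0)

/-- `eta1 τ = ζ(z+1|τ) - ζ(z|τ)` is the first quasi-period. -/
def IsEta1 (zeta : ℂ → ℂ → ℂ) (eta1 : ℂ → ℂ) : Prop :=
  ∀ τ : ℂ, 0 < τ.im → ∀ z : ℂ, ¬ InLattice τ z →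
    eta1 τ = zeta τ (z + 1) - zeta τ z

/-- `eta2 τ = ζ(z+τ|τ) - ζ(z|τ)` is the second quasi-period. -/
def IsEta2 (zeta : ℂ → ℂ → ℂ) (eta2 : ℂ → ℂ) : Prop :=
  ∀ τ : ℂ, 0 < τ.im → ∀ z : ℂ, ¬ InLattice τ z →
    eta2 τ = zeta τ (z + τ) - zeta τ z

/-- `sigma` is the Weierstrass sigma function: entire, odd, with
`∂/∂z log σ = ζ` off the lattice and `σ(z|τ)/z → 1` as `z → 0`. -/
def IsWeierstrassSigma (zeta sigma : ℂ → ℂ → ℂ) : Prop :=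
  ∀ τ : ℂ, 0 < τ.im →
    (∀ z : ℂ, sigma τ (-z) = - sigma τ z) ∧
    Differentiable ℂ (sigma τ) ∧
    (∀ z : ℂ, ¬ InLattice τ z → HasDerivAt (sigma τ) (zeta τ z * sigma τ z) z) ∧
    Tendsto (fun z => sigma τ z / z) (𝓝[≠] (0 : ℂ)) (𝓝 1)

/-- the Hamiltonian system (142) for `(p(τ), A(τ))` on `V`. -/
def HamSystem (n : Fin 4 → ℂ) (zeta : ℂ → ℂ → ℂ) (eta1 : ℂ → ℂ)
    (V : Set ℂ) (p A : ℂ → ℂ) : Prop :=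
  ∀ τ ∈ V,
    HasDerivAt p ((-Complex.I / (4 * (Real.pi : ℂ))) *
      (2 * A τ - zeta τ (2 * p τ) + 2 * p τ * eta1 τ)) τ ∧
    HasDerivAt A ((Complex.I / (4 * (Real.pi : ℂ))) *
      ((2 * wp τ (2 * p τ) + 2 * eta1 τ) * A τ - (3 / 2) * wpd τ (2 * p τ)
        - ∑ k : Fin 4, n k * (n k + 1) * wpd τ (p τ + halfp τ k / 2))) τ

/-- the generalized Lamé potential `I(z;τ)`. -/
def Ipot (n : Fin 4 → ℂ) (zeta : ℂ → ℂ → ℂ) (A B p τ z : ℂ) : ℂ :=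
  (∑ k : Fin 4, n k * (n k + 1) * wp τ (z + halfp τ k / 2))
    + (3 / 4) * (wp τ (z + p) + wp τ (z - p))
    + A * (zeta τ (z + p) - zeta τ (z - p)) + B

end

open scoped PeriodPair

namespace PeriodPair

variable (L : PeriodPair)

lemma eventually_nhdsNE_notMem_lattice (x : ℂ) : ∀ᶠ z in 𝓝[≠] x, z ∉ L.lattice := by
  filter_upwards [self_mem_nhdsWithin,
    mem_nhdsWithin_of_mem_nhds (L.compl_lattice_sdiff_singleton_mem_nhds x)] with z hz hz'
  simp_all

lemma isPreconnected_compl_lattice : IsPreconnected (L.lattice : Set ℂ)ᶜ := by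
  refine (Set.Countable.isPathConnected_compl_of_one_lt_rank ?_ ?_).isConnected.isPreconnected
  · rw [Complex.rank_real_complex]; norm_num
  · exact (L.latticeEquivProd.toEquiv.countable_iff.mpr inferInstance : Countable L.lattice)

/-- A function that is holomorphic off the lattice, doubly periodic, and has a finite limit
at `0` is constant. -/
lemma eq_of_periodic_of_tendsto {f : ℂ → ℂ} {c : ℂ}
    (hper : ∀ z ∉ L.lattice, ∀ l ∈ L.lattice, f (z + l) = f z)
    (hd : ∀ z ∉ L.lattice, DifferentiableAt ℂ f z)
    (h0 : Tendsto f (𝓝[≠] 0) (𝓝 c)) {z : ℂ} (hz : z ∉ L.lattice) : f z = c := by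
  classical
  let g : ℂ → ℂ := fun z ↦ if z ∈ L.lattice then c else f z
  have gper (z l) (hl : l ∈ L.lattice) : g (z + l) = g z := by
    by_cases h : z ∈ L.lattice
    · simp [g, h, add_mem h hl]
    · have h' : z + l ∉ L.lattice := fun h'' ↦ h (by simpa using sub_mem h'' hl)
      simp [g, h, h', hper z h l hl]
  have gd (z) (hz : z ∉ L.lattice) : DifferentiableAt ℂ g z := by
    refine (hd z hz).congr_of_eventuallyEq ?_
    filter_upwards [L.isClosed_lattice.isOpen_compl.mem_nhds hz] with w hw
    exact if_neg hw
  have g0 : DifferentiableAt ℂ g 0 := by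
    refine (Complex.analyticAt_of_differentiable_on_punctured_nhds_of_continuousAt ?_
      ?_).differentiableAt
    · filter_upwards [L.eventually_nhdsNE_notMem_lattice 0] with w hw using gd w hw
    · rw [← continuousWithinAt_compl_self, ContinuousWithinAt]
      have : g 0 = c := by simp [g]
      rw [this]
      refine h0.congr' ?_
      filter_upwards [L.eventually_nhdsNE_notMem_lattice 0] with w hw
      exact (if_neg hw).symm
  have gdiff : Differentiable ℂ g := by
    intro z
    by_cases hz : z ∈ L.lattice
    · have : g = fun w ↦ g (w - z) := by
        ext w
        conv_lhs => rw [← sub_add_cancel w z]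
        exact gper _ _ hz
      rw [this]
      rw [← sub_self z] at g0
      exact g0.comp (f := fun w ↦ w - z) z (by fun_prop)
    · exact gd z hz
  have := gdiff.apply_eq_apply_of_bounded (IsZLattice.isCompact_range_of_periodic L.lattice _
    gdiff.continuous gper).isBounded z 0
  simpa [g, hz] using this

lemma tendsto_weierstrassP_cobounded :
    Tendsto ℘[L] (𝓝[≠] 0) (Bornology.cobounded ℂ) := by
  apply tendsto_cobounded_of_meromorphicOrderAt_neg
  rw [L.order_weierstrassP 0 (zero_mem _)]
  exact WithTop.coe_lt_coe.mpr (by norm_num : (-2 : ℤ) < 0)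

lemma eventually_weierstrassP_ne (x : ℂ) : ∀ᶠ z in 𝓝[≠] 0, ℘[L] z ≠ x :=
  L.tendsto_weierstrassP_cobounded.eventually
    (Bornology.isBounded_def.mp Bornology.isBounded_singleton)

lemma derivWeierstrassP_eq_zero_of_add_self_mem {h : ℂ} (hh : h + h ∈ L.lattice) :
    ℘'[L] h = 0 := by
  have := L.derivWeierstrassP_add_coe (-h) ⟨_, hh⟩
  simp only [L.derivWeierstrassP_neg] at this
  rw [neg_add_cancel_left] at this
  exact CharZero.eq_neg_self_iff.mp this

lemma weierstrassP_eq_inv_sq_add (z : ℂ) : ℘[L] z = (z ^ 2)⁻¹ + ℘[L - (0 : ℂ)] z := by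
  have := L.weierstrassPExcept_add 0 z
  simp at this
  rw [← this]; ring

lemma exists_pow_mul_of_analyticAt {f : ℂ → ℂ} {a : ℂ} (hf : AnalyticAt ℂ f a) (h0 : f a = 0)
    (h1 : deriv f a = 0) :
    ∃ g : ℂ → ℂ, AnalyticAt ℂ g a ∧ ∀ᶠ z in 𝓝 a, f z = (z - a) ^ 2 * g z := by
  have := (natCast_le_analyticOrderAt (n := 2) hf).mp
    ((natCast_le_analyticOrderAt_iff_iteratedDeriv_eq_zero hf).mpr fun i hi ↦ by
      interval_cases i
      · simpa
      · simpa)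
  simpa using this

/-- For a half period `h` of `L`, the product `(℘(z + h) - ℘(h)) (℘(z) - ℘(h))` is constant. -/
lemma exists_weierstrassP_sub_mul_eq (L' : PeriodPair) {h : ℂ} (hh : h ∉ L.lattice)
    (hL' : ∀ z, z ∈ L'.lattice ↔ z ∈ L.lattice ∨ z + h ∈ L.lattice) :
    ∃ c, ∀ z ∉ L'.lattice, (℘[L] (z + h) - ℘[L] h) * (℘[L] z - ℘[L] h) = c := by
  have hh2 : h + h ∈ L.lattice := by
    have h1 : h ∈ L'.lattice := by
      simpa using neg_mem ((hL' (-h)).mpr (by simp))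
    exact ((hL' h).mp h1).resolve_left hh
  have hLL' (z) (hz : z ∉ L'.lattice) : z ∉ L.lattice ∧ z + h ∉ L.lattice := by
    simpa [hL'] using hz
  have hana : AnalyticAt ℂ (fun z ↦ ℘[L] z - ℘[L] h) h :=
    (L.analyticOnNhd_weierstrassP h hh).sub analyticAt_const
  obtain ⟨g, hg, hfg⟩ := exists_pow_mul_of_analyticAt hana (by simp) (by
    rw [deriv_sub_const, L.deriv_weierstrassP, L.derivWeierstrassP_eq_zero_of_add_self_mem hh2])
  refine ⟨g h, fun z hz ↦ L'.eq_of_periodic_of_tendsto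
    (f := fun z ↦ (℘[L] (z + h) - ℘[L] h) * (℘[L] z - ℘[L] h)) ?_ ?_ ?_ hz⟩
  · intro z hz l hl
    rcases (hL' l).mp hl with hl | hl
    · have h1 := L.weierstrassP_add_coe z ⟨l, hl⟩
      have h2 := L.weierstrassP_add_coe (z + h) ⟨l, hl⟩
      simp only at h1 h2 ⊢
      rw [h1, add_right_comm, h2]
    · have h1 := L.weierstrassP_add_coe z ⟨l + h, hl⟩
      have h2 := L.weierstrassP_add_coe (z + l) ⟨h + h, hh2⟩
      have h3 := L.weierstrassP_add_coe (z + h) ⟨l + h, hl⟩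
      simp only at h1 h2 h3 ⊢
      rw [add_assoc z l h, h1, ← h2, ← h3]
      ring_nf
  · intro z hz
    have h1 := (L.analyticOnNhd_weierstrassP z (hLL' z hz).1).differentiableAt
    have h2 := (L.analyticOnNhd_weierstrassP (z + h) (hLL' z hz).2).differentiableAt
    have h3 : DifferentiableAt ℂ (fun z ↦ ℘[L] (z + h)) z :=
      h2.comp (f := fun z ↦ z + h) z (by fun_prop)
    fun_prop
  · have hT : Tendsto (fun z : ℂ ↦ z + h) (𝓝 0) (𝓝 h) := by
      simpa using (continuous_add_const h).tendsto (0 : ℂ)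
    have hP : ContinuousAt ℘[L - (0 : ℂ)] 0 := (L.analyticAt_weierstrassPExcept 0).continuousAt
    have hlim : Tendsto (fun z ↦ g (z + h) * (1 + z ^ 2 * (℘[L - (0 : ℂ)] z - ℘[L] h)))
        (𝓝 0) (𝓝 (g h * (1 + 0 ^ 2 * (℘[L - (0 : ℂ)] 0 - ℘[L] h)))) :=
      (hg.continuousAt.tendsto.comp hT).mul (tendsto_const_nhds.add
        ((tendsto_id.pow 2).mul (hP.tendsto.sub tendsto_const_nhds)))
    simp only [ne_eq, OfNat.ofNat_ne_zero, not_false_eq_true, zero_pow, zero_mul, add_zero,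
      mul_one] at hlim
    refine (hlim.mono_left nhdsWithin_le_nhds).congr' ?_
    filter_upwards [self_mem_nhdsWithin, nhdsWithin_le_nhds (hT.eventually hfg)] with z hz hz'
    rw [hz', L.weierstrassP_eq_inv_sq_add z]
    have : z ≠ 0 := hz
    field_simp
    ring

lemma weierstrassP_half_ne (L' : PeriodPair) {h z : ℂ} (hh : h ∉ L.lattice)
    (hL' : ∀ z, z ∈ L'.lattice ↔ z ∈ L.lattice ∨ z + h ∈ L.lattice) (hz : z ∉ L'.lattice) :
    ℘[L] z ≠ ℘[L] h := by
  intro heq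
  obtain ⟨c, hc⟩ := L.exists_weierstrassP_sub_mul_eq L' hh hL'
  have hc0 : c = 0 := by rw [← hc z hz, heq]; simp
  subst hc0
  have hev : ∀ᶠ w in 𝓝[≠] (0 : ℂ), ℘[L] (w + h) = ℘[L] h := by
    filter_upwards [L'.eventually_nhdsNE_notMem_lattice 0,
      L.eventually_weierstrassP_ne (℘[L] h)] with w hw hw'
    have := (mul_eq_zero.mp (hc w hw)).resolve_right (sub_ne_zero.mpr hw')
    exact sub_eq_zero.mp this
  have hev' : ∃ᶠ w in 𝓝[≠] h, ℘[L] w = ℘[L] h := by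
    have hT : Tendsto (fun w ↦ w - h) (𝓝[≠] h) (𝓝[≠] 0) := by
      refine tendsto_nhdsWithin_iff.mpr ⟨?_, ?_⟩
      · simpa using ((continuous_sub_right h).tendsto h).mono_left nhdsWithin_le_nhds
      · filter_upwards [self_mem_nhdsWithin] with w hw using sub_ne_zero.mpr hw
    simpa using (hT.eventually hev).frequently
  have hconst := L.analyticOnNhd_weierstrassP.eqOn_of_preconnected_of_frequently_eq
    (analyticOnNhd_const (v := ℘[L] h)) L.isPreconnected_compl_lattice hh hev'
  obtain ⟨w, hw, hw'⟩ := ((L.eventually_nhdsNE_notMem_lattice 0).and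
    (L.eventually_weierstrassP_ne (℘[L] h))).exists
  exact hw' (hconst hw)

lemma cubic_at_half {h : ℂ} (hh : h ∉ L.lattice) (hh2 : h + h ∈ L.lattice) :
    4 * ℘[L] h ^ 3 - L.g₂ * ℘[L] h - L.g₃ = 0 := by
  rw [← L.derivWeierstrassP_sq h hh, L.derivWeierstrassP_eq_zero_of_add_self_mem hh2]
  simp

end PeriodPair

lemma linearIndependent_pair_of_im {a : ℝ} {τ : ℂ} (ha : a ≠ 0) (hτ : τ.im ≠ 0) :
    LinearIndependent ℝ ![(a : ℂ), τ] := by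
  refine LinearIndependent.pair_iff.mpr fun s t h ↦ ?_
  have him := congrArg Complex.im h
  have hre := congrArg Complex.re h
  simp [hτ] at him hre
  simp_all

/-- The period pair `(1, τ)`. -/
noncomputable def tauPair (τ : ℂ) (hτ : 0 < τ.im) : PeriodPair where
  ω₁ := 1
  ω₂ := τ
  indep := by simpa using linearIndependent_pair_of_im one_ne_zero hτ.ne'

section

variable {τ : ℂ} (hτ : 0 < τ.im)

lemma mem_tauPair_lattice {z : ℂ} : z ∈ (tauPair τ hτ).lattice ↔ InLattice τ z := by
  rw [PeriodPair.mem_lattice, InLattice]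
  simp [tauPair, eq_comm]

lemma wp_eq_weierstrassPExcept (z : ℂ) :
    ∑' w : {w : ℤ × ℤ // w ≠ 0}, ((z - ((w.1.1 : ℂ) + (w.1.2 : ℂ) * τ))⁻¹ ^ 2
      - ((w.1.1 : ℂ) + (w.1.2 : ℂ) * τ)⁻¹ ^ 2) = (tauPair τ hτ).weierstrassPExcept 0 z := by
  rw [PeriodPair.weierstrassPExcept,
    ← (tauPair τ hτ).latticeEquivProd.symm.toEquiv.tsum_eq,
    ← tsum_subtype_eq_of_support_subset (s := {w : ℤ × ℤ | w ≠ 0})]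
  · refine tsum_congr fun w ↦ ?_
    have hw : ((tauPair τ hτ).latticeEquivProd.symm w.1 : ℂ) ≠ 0 := by
      simpa using w.2
    have := (tauPair τ hτ).latticeEquiv_symm_apply w.1
    simp only [LinearEquiv.coe_toEquiv, if_neg hw]
    rw [this]
    simp [tauPair]
  · intro w hw h0
    simp [h0] at hw

lemma wp_eq_weierstrassP : wp τ = ℘[tauPair τ hτ] := by
  ext z
  rw [wp, wp_eq_weierstrassPExcept hτ, PeriodPair.weierstrassP_eq_inv_sq_add, inv_pow]

lemma wpd_eq_derivWeierstrassP : wpd τ = ℘'[tauPair τ hτ] := by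
  ext z
  rw [wpd, wp_eq_weierstrassP hτ, PeriodPair.deriv_weierstrassP]

/-- A rational combination of `1` and `τ` is a lattice point iff its coefficients are integers. -/
lemma add_mul_mem_tauPair_lattice_iff {a b : ℚ} :
    (a : ℂ) + b * τ ∈ (tauPair τ hτ).lattice ↔ a.den = 1 ∧ b.den = 1 := by
  simpa [tauPair] using (tauPair τ hτ).mul_ω₁_add_mul_ω₂_mem_lattice (α := a) (β := b)

lemma g2_eq : g2 τ = (tauPair τ hτ).g₂ := by
  set L := tauPair τ hτ with hL
  have hw (z : ℂ) : z ∈ L.lattice ↔ ∃ m n : ℤ, z = m + n * τ := mem_tauPair_lattice hτ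
  have h1 : (1 / 2 : ℂ) ∉ L.lattice := by
    simpa using (add_mul_mem_tauPair_lattice_iff hτ (a := 1 / 2) (b := 0)).not.mpr (by norm_num)
  have h2 : (τ / 2 : ℂ) ∉ L.lattice := by
    simpa [div_eq_inv_mul] using
      (add_mul_mem_tauPair_lattice_iff hτ (a := 0) (b := 1 / 2)).not.mpr (by norm_num)
  have h3 : ((1 + τ) / 2 : ℂ) ∉ L.lattice := by
    simpa [div_eq_inv_mul, mul_add] using
      (add_mul_mem_tauPair_lattice_iff hτ (a := 1 / 2) (b := 1 / 2)).not.mpr (by norm_num)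
  let L₁ : PeriodPair := ⟨1 / 2, τ, by
    simpa using linearIndependent_pair_of_im (a := 1 / 2) (by norm_num) hτ.ne'⟩
  let L₂ : PeriodPair := ⟨1, τ / 2, by
    simpa using linearIndependent_pair_of_im (a := 1) (τ := τ / 2) (by norm_num)
      (by simpa using hτ.ne')⟩
  have hL₁ (z : ℂ) : z ∈ L₁.lattice ↔ z ∈ L.lattice ∨ z + 1 / 2 ∈ L.lattice := by
    simp only [PeriodPair.mem_lattice (L := L₁), hw, L₁]
    constructor
    · rintro ⟨m, n, rfl⟩
      rcases Int.even_or_odd' m with ⟨k, rfl | rfl⟩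
      · exact .inl ⟨k, n, by push_cast; ring⟩
      · exact .inr ⟨k + 1, n, by push_cast; ring⟩
    · rintro (⟨m, n, h⟩ | ⟨m, n, h⟩)
      · exact ⟨2 * m, n, by rw [h]; push_cast; ring⟩
      · exact ⟨2 * m - 1, n, by rw [eq_sub_of_add_eq h]; push_cast; ring⟩
  have hL₂ (z : ℂ) : z ∈ L₂.lattice ↔ z ∈ L.lattice ∨ z + τ / 2 ∈ L.lattice := by
    simp only [PeriodPair.mem_lattice (L := L₂), hw, L₂]
    constructor
    · rintro ⟨m, n, rfl⟩
      rcases Int.even_or_odd' n with ⟨k, rfl | rfl⟩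
      · exact .inl ⟨m, k, by push_cast; ring⟩
      · exact .inr ⟨m, k + 1, by push_cast; ring⟩
    · rintro (⟨m, n, h⟩ | ⟨m, n, h⟩)
      · exact ⟨m, 2 * n, by rw [h]; push_cast; ring⟩
      · exact ⟨m, 2 * n - 1, by rw [eq_sub_of_add_eq h]; push_cast; ring⟩
  have hτL : τ ∈ L.lattice := L.ω₂_mem_lattice
  have h1L : (1 : ℂ) ∈ L.lattice := L.ω₁_mem_lattice
  have n21 : τ / 2 ∉ L₁.lattice := by
    rw [hL₁, not_or]
    refine ⟨h2, ?_⟩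
    convert! h3 using 1
    ring_nf
  have n31 : (1 + τ) / 2 ∉ L₁.lattice := by
    rw [hL₁, not_or]
    refine ⟨h3, fun h ↦ h2 ?_⟩
    convert! sub_mem h h1L using 1
    ring
  have n32 : (1 + τ) / 2 ∉ L₂.lattice := by
    rw [hL₂, not_or]
    refine ⟨h3, fun h ↦ h1 ?_⟩
    convert! sub_mem h hτL using 1
    ring
  have d21 := L.weierstrassP_half_ne L₁ h1 hL₁ n21
  have d31 := L.weierstrassP_half_ne L₁ h1 hL₁ n31
  have d32 := L.weierstrassP_half_ne L₂ h2 hL₂ n32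
  have c1 := L.cubic_at_half h1 (by convert h1L using 1; norm_num)
  have c2 := L.cubic_at_half h2 (by convert hτL using 1; ring)
  have c3 := L.cubic_at_half h3 (by convert add_mem h1L hτL using 1; ring)
  rw [g2, e1, e2, e3, wp_eq_weierstrassP hτ, ← hL]
  generalize ℘[L] (1 / 2) = x at *
  generalize ℘[L] (τ / 2) = y at *
  generalize ℘[L] ((1 + τ) / 2) = w at *
  have hxy : 4 * (y ^ 2 + y * x + x ^ 2) = L.g₂ := by
    apply mul_left_cancel₀ (sub_ne_zero.mpr d21)
    linear_combination c2 - c1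
  have hxw : 4 * (w ^ 2 + w * x + x ^ 2) = L.g₂ := by
    apply mul_left_cancel₀ (sub_ne_zero.mpr d31)
    linear_combination c3 - c1
  have hsum : x + y + w = 0 := by
    apply mul_left_cancel₀ (sub_ne_zero.mpr d32)
    linear_combination (hxw - hxy) / 4
  linear_combination hxy - 4 * (x + y) * hsum

end

/-- The lattice point `m + nτ` with coordinates `(m, n)`. -/
def latticePt (τ : ℂ) (w : ℤ × ℤ) : ℂ := w.1 + w.2 * τ

/-- The summand of `℘(z|τ)` attached to a lattice point. -/
noncomputable def wpTerm (τ z : ℂ) (w : ℤ × ℤ) : ℂ :=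
  (z - latticePt τ w)⁻¹ ^ 2 - (latticePt τ w)⁻¹ ^ 2

/-- The `τ`-derivative of `wpTerm`. -/
noncomputable def wpTermTau (τ z : ℂ) (w : ℤ × ℤ) : ℂ :=
  2 * w.2 * ((z - latticePt τ w)⁻¹ ^ 3 + (latticePt τ w)⁻¹ ^ 3)

/-- The `z`-derivative of `wpTerm`. -/
noncomputable def wpTermZ (τ z : ℂ) (w : ℤ × ℤ) : ℂ := -2 * (z - latticePt τ w)⁻¹ ^ 3

/-- The series of `τ`-derivatives of the summands of `℘(z|τ)`. -/
noncomputable def wpTau (τ z : ℂ) : ℂ := ∑' w : {w : ℤ × ℤ // w ≠ 0}, wpTermTau τ z w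

section

variable {τ : ℂ}

lemma wp_eq_tsum (t z : ℂ) :
    wp t z = z⁻¹ ^ 2 + ∑' w : {w : ℤ × ℤ // w ≠ 0}, wpTerm t z w := rfl

lemma norm_latticePt_le (hτ : 0 < τ.im) {t : ℂ} (ht : ‖t - τ‖ ≤ τ.im / 2) (w : ℤ × ℤ) :
    ‖latticePt τ w‖ ≤ 2 * ‖latticePt t w‖ := by
  have him : |(w.2 : ℝ)| * τ.im ≤ ‖latticePt τ w‖ := by
    have := Complex.abs_im_le_norm (latticePt τ w)
    simpa [latticePt, abs_mul, abs_of_pos hτ] using this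
  have hdiff : ‖latticePt τ w - latticePt t w‖ ≤ ‖latticePt τ w‖ / 2 := by
    have : latticePt τ w - latticePt t w = w.2 * (τ - t) := by simp [latticePt]; ring
    rw [this, norm_mul, norm_sub_rev, Complex.norm_intCast]
    nlinarith [mul_le_mul_of_nonneg_left ht (abs_nonneg (w.2 : ℝ))]
  have := norm_sub_norm_le (latticePt τ w) (latticePt t w)
  linarith

lemma latticePt_ne_zero (hτ : 0 < τ.im) {w : ℤ × ℤ} (hw : w ≠ 0) : latticePt τ w ≠ 0 := by
  intro h
  have hz : (tauPair τ hτ).latticeEquivProd.symm w = 0 := by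
    apply Subtype.ext
    rw [PeriodPair.latticeEquiv_symm_apply]
    simpa [tauPair, latticePt] using h
  exact hw (by simpa using hz)

lemma summable_norm_latticePt (hτ : 0 < τ.im) :
    Summable fun w : {w : ℤ × ℤ // w ≠ 0} ↦ ‖latticePt τ w‖⁻¹ ^ 3 := by
  have := ZLattice.summable_norm_pow_inv (tauPair τ hτ).lattice 3 (by simp)
  rw [← (tauPair τ hτ).latticeEquivProd.symm.toEquiv.summable_iff] at this
  refine (this.subtype {w | w ≠ 0}).congr fun w ↦ ?_
  have := (tauPair τ hτ).latticeEquiv_symm_apply w.1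
  simp only [Function.comp, LinearEquiv.coe_toEquiv, Submodule.coe_norm, this]
  simp [tauPair, latticePt]

/-- Locally uniform summability of the defining series of `℘(z|τ)` jointly in `(τ, z)`. -/
lemma exists_summable_bound_wpTerm (hτ : 0 < τ.im) {z₀ : ℂ}
    (hz₀ : ∀ w : ℤ × ℤ, w ≠ 0 → z₀ ≠ latticePt τ w) :
    ∃ u : {w : ℤ × ℤ // w ≠ 0} → ℝ, Summable u ∧ ∀ᶠ p in 𝓝 (τ, z₀),
      ∀ w : {w : ℤ × ℤ // w ≠ 0}, p.2 ≠ latticePt p.1 w ∧ latticePt p.1 w ≠ 0 ∧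
        ‖wpTerm p.1 p.2 w‖ ≤ u w := by
  classical
  set R : ℝ := ‖z₀‖ + 1 with hR
  have hR0 : 0 < R := by positivity
  have hsum := summable_norm_latticePt hτ
  have hcof : ∀ᶠ w : {w : ℤ × ℤ // w ≠ 0} in cofinite, 4 * R ≤ ‖latticePt τ w‖ := by
    filter_upwards [hsum.tendsto_cofinite_zero.eventually_lt_const
      (show (0 : ℝ) < (4 * R)⁻¹ ^ 3 by positivity)] with w hw
    have hpos : 0 < ‖latticePt τ w‖ := norm_pos_iff.mpr (latticePt_ne_zero hτ w.2)
    have := lt_of_pow_lt_pow_left₀ 3 (by positivity) hw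
    exact ((inv_lt_inv₀ hpos (by positivity)).mp this).le
  refine ⟨fun w ↦ if 4 * R ≤ ‖latticePt τ w‖ then 80 * R * ‖latticePt τ w‖⁻¹ ^ 3
    else ‖wpTerm τ z₀ w‖ + 1, ?_, ?_⟩
  · refine (hsum.mul_left (80 * R)).congr_cofinite ?_
    filter_upwards [hcof] with w hw
    simp [hw]
  · have hfst : Tendsto (fun p : ℂ × ℂ ↦ p.1) (𝓝 (τ, z₀)) (𝓝 τ) := continuousAt_fst
    have hsnd : Tendsto (fun p : ℂ × ℂ ↦ p.2) (𝓝 (τ, z₀)) (𝓝 z₀) := continuousAt_snd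
    have hnear : ∀ᶠ p : ℂ × ℂ in 𝓝 (τ, z₀), ‖p.1 - τ‖ ≤ τ.im / 2 := by
      filter_upwards [hfst.eventually (Metric.closedBall_mem_nhds τ (half_pos hτ))] with p hp
      simpa [dist_eq_norm] using hp
    have hbd : ∀ᶠ p : ℂ × ℂ in 𝓝 (τ, z₀), ‖p.2‖ < R :=
      hsnd.norm.eventually_lt_const (by simp [hR])
    have hfin : ∀ᶠ p : ℂ × ℂ in 𝓝 (τ, z₀), ∀ w ∈ {w : {w : ℤ × ℤ // w ≠ 0} |
        ¬ 4 * R ≤ ‖latticePt τ w‖}, p.2 ≠ latticePt p.1 w ∧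
          ‖wpTerm p.1 p.2 w‖ ≤ ‖wpTerm τ z₀ w‖ + 1 := by
      rw [Filter.eventually_all_finite (by simpa [Filter.eventually_cofinite] using hcof)]
      intro w _
      have h1 : ContinuousAt (fun p : ℂ × ℂ ↦ latticePt p.1 w) (τ, z₀) := by
        unfold latticePt; fun_prop
      have h2 : z₀ - latticePt τ w ≠ 0 := sub_ne_zero.mpr (hz₀ w w.2)
      have h3 : latticePt τ w ≠ 0 := latticePt_ne_zero hτ w.2
      have h4 : ContinuousAt (fun p : ℂ × ℂ ↦ p.2 - latticePt p.1 w) (τ, z₀) :=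
        continuousAt_snd.sub h1
      have h5 : ContinuousAt (fun p : ℂ × ℂ ↦ wpTerm p.1 p.2 w) (τ, z₀) :=
        ((h4.inv₀ h2).pow 2).sub ((h1.inv₀ h3).pow 2)
      filter_upwards [h4.eventually_ne h2,
        h5.norm.tendsto.eventually_lt_const (lt_add_one _)] with p hp hp'
      exact ⟨sub_ne_zero.mp hp, hp'.le⟩
    filter_upwards [hnear, hbd, hfin] with p hp hp2 hp3 w
    have hle := norm_latticePt_le hτ hp w
    have hpos : 0 < ‖latticePt τ w‖ := norm_pos_iff.mpr (latticePt_ne_zero hτ w.2)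
    have hne : latticePt p.1 w ≠ 0 := norm_pos_iff.mp (by linarith)
    by_cases hw : 4 * R ≤ ‖latticePt τ w‖
    · refine ⟨fun h ↦ ?_, hne, ?_⟩
      · rw [h] at hp2
        linarith
      · rw [if_pos hw]
        have := PeriodPair.weierstrassP_bound R hR0 p.2 hp2 (latticePt p.1 w) (by linarith)
        have hinv : ‖latticePt p.1 w‖⁻¹ ≤ 2 * ‖latticePt τ w‖⁻¹ := by
          rw [← div_eq_mul_inv, inv_le_comm₀ (by linarith) (by positivity), inv_div]
          linarith
        calc ‖wpTerm p.1 p.2 w‖ ≤ 10 * R * ‖latticePt p.1 w‖⁻¹ ^ 3 := by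
              have h3 : ‖latticePt p.1 w‖ ^ (-3 : ℝ) = ‖latticePt p.1 w‖⁻¹ ^ 3 := by
                rw [Real.rpow_neg (norm_nonneg _), inv_pow]
                norm_cast
              simpa [wpTerm, h3] using this
          _ ≤ 10 * R * (2 * ‖latticePt τ w‖⁻¹) ^ 3 := by gcongr
          _ = _ := by ring
    · rw [if_neg hw]
      exact ⟨(hp3 w hw).1, hne, (hp3 w hw).2⟩

lemma hasDerivAt_wpTerm_line {z₀ : ℂ} {w : ℤ × ℤ} {a b s : ℂ}
    (h : z₀ + b * s ≠ latticePt (τ + a * s) w) (h' : latticePt (τ + a * s) w ≠ 0) :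
    HasDerivAt (fun s ↦ wpTerm (τ + a * s) (z₀ + b * s) w)
      (a * wpTermTau (τ + a * s) (z₀ + b * s) w + b * wpTermZ (τ + a * s) (z₀ + b * s) w) s := by
  have h1 : HasDerivAt (fun s ↦ latticePt (τ + a * s) w) (w.2 * a) s := by
    have := ((((hasDerivAt_id s).const_mul a).const_add τ).const_mul (w.2 : ℂ)).const_add (w.1 : ℂ)
    simpa [latticePt] using this
  have h2 : HasDerivAt (fun s ↦ z₀ + b * s) b s := by
    simpa using ((hasDerivAt_id s).const_mul b).const_add z₀
  have h3 := ((h2.sub h1).inv (sub_ne_zero.mpr h)).pow 2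
  have h4 := (h1.inv h').pow 2
  refine (h3.sub h4).congr_deriv ?_
  have h5 := sub_ne_zero.mpr h
  simp only [wpTermTau, wpTermZ, Pi.sub_apply, Pi.inv_apply, Nat.add_one_sub_one, pow_one,
    Nat.cast_ofNat]
  generalize z₀ + b * s - latticePt (τ + a * s) w = x at *
  generalize latticePt (τ + a * s) w = y at *
  field_simp
  ring

lemma hasSum_wpTerm_line (hτ : 0 < τ.im) {z₀ : ℂ}
    (hz₀ : ∀ w : ℤ × ℤ, w ≠ 0 → z₀ ≠ latticePt τ w) (a b : ℂ) :
    ∃ d, HasDerivAt (fun s ↦ ∑' w : {w : ℤ × ℤ // w ≠ 0}, wpTerm (τ + a * s) (z₀ + b * s) w) d 0 ∧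
      HasSum (fun w : {w : ℤ × ℤ // w ≠ 0} ↦ a * wpTermTau τ z₀ w + b * wpTermZ τ z₀ w) d := by
  obtain ⟨u, hu, hev⟩ := exists_summable_bound_wpTerm hτ hz₀
  have hT : Tendsto (fun s : ℂ ↦ (τ + a * s, z₀ + b * s)) (𝓝 0) (𝓝 (τ, z₀)) := by
    have : Continuous fun s : ℂ ↦ (τ + a * s, z₀ + b * s) := by fun_prop
    simpa using this.tendsto 0
  obtain ⟨U, hU, hUo, hU0⟩ := eventually_nhds_iff.mp (hT.eventually hev)
  have hd (w : {w : ℤ × ℤ // w ≠ 0}) :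
      DifferentiableOn ℂ (fun s ↦ wpTerm (τ + a * s) (z₀ + b * s) w) U := fun s hs ↦
    (hasDerivAt_wpTerm_line (hU s hs w).1 (hU s hs w).2.1).differentiableAt.differentiableWithinAt
  have hle (w : {w : ℤ × ℤ // w ≠ 0}) (s) (hs : s ∈ U) := (hU s hs w).2.2
  refine ⟨_, ((Complex.differentiableOn_tsum_of_summable_norm hu hd hUo hle).differentiableAt
    (hUo.mem_nhds hU0)).hasDerivAt, ?_⟩
  refine (Complex.hasSum_deriv_of_summable_norm hu hd hUo hle hU0).congr_fun fun w ↦ ?_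
  rw [(hasDerivAt_wpTerm_line (hU 0 hU0 w).1 (hU 0 hU0 w).2.1).deriv]
  simp

end

section

variable {τ : ℂ}

lemma ne_latticePt_of_not_inLattice {z : ℂ} (hz : ¬ InLattice τ z) (w : ℤ × ℤ) :
    z ≠ latticePt τ w := fun h ↦ hz ⟨w.1, w.2, h⟩

/-- The derivative of `℘(z|τ)` along a line in the `(τ, z)`-space. -/
lemma hasDerivAt_wp_line (hτ : 0 < τ.im) {z : ℂ} (hz : ¬ InLattice τ z) (a b : ℂ) :
    HasDerivAt (fun s ↦ wp (τ + a * s) (z + b * s)) (a * wpTau τ z + b * wpd τ z) 0 := by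
  have hz' : ∀ w : ℤ × ℤ, w ≠ 0 → z ≠ latticePt τ w :=
    fun w _ ↦ ne_latticePt_of_not_inLattice hz w
  have hz0 : z ≠ 0 := by simpa [latticePt] using ne_latticePt_of_not_inLattice hz 0
  obtain ⟨d₁, -, h₁⟩ := hasSum_wpTerm_line hτ hz' 1 0
  obtain ⟨d₂, hd₂, h₂⟩ := hasSum_wpTerm_line hτ hz' 0 1
  obtain ⟨d, hd, h⟩ := hasSum_wpTerm_line hτ hz' a b
  simp only [one_mul, zero_mul, add_zero, zero_add] at h₁ h₂ hd₂
  obtain rfl : d₁ = wpTau τ z := h₁.tsum_eq.symm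
  obtain rfl : d = a * wpTau τ z + b * d₂ := h.unique ((h₁.mul_left a).add (h₂.mul_left b))
  have hpole (b : ℂ) : HasDerivAt (fun s ↦ (z + b * s)⁻¹ ^ 2) (b * (-2 * z⁻¹ ^ 3)) 0 := by
    have h2 : HasDerivAt (fun s ↦ z + b * s) b 0 := by
      simpa using ((hasDerivAt_id (0 : ℂ)).const_mul b).const_add z
    refine ((h2.inv (by simpa using hz0)).pow 2).congr_deriv ?_
    simp only [Pi.inv_apply, mul_zero, add_zero, Nat.add_one_sub_one, pow_one, Nat.cast_ofNat]
    field_simp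
  have hwpd : wpd τ z = -2 * z⁻¹ ^ 3 + d₂ := by
    have h3 := (hpole 1).add hd₂
    have h4 : HasDerivAt (fun s ↦ wp τ (z + 1 * s)) (-2 * z⁻¹ ^ 3 + d₂) 0 := by
      simpa [wp_eq_tsum, Pi.add_def] using h3
    have h5 : HasDerivAt (wp τ) (-2 * z⁻¹ ^ 3 + d₂) z := by
      have h6 : HasDerivAt (fun x : ℂ ↦ x - z) 1 z := (hasDerivAt_id z).sub_const z
      have h7 := HasDerivAt.comp z (h₂ := fun s ↦ wp τ (z + 1 * s)) (h := fun x ↦ x - z)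
        (by simpa using h4) h6
      simpa [Function.comp_def] using h7
    exact h5.deriv
  have := (hpole b).add hd
  rw [hwpd]
  refine (this.congr_deriv (by ring)).congr_of_eventuallyEq (Eventually.of_forall fun s ↦ ?_)
  simp [wp_eq_tsum]

lemma hasDerivAt_wp_tau (hτ : 0 < τ.im) {z : ℂ} (hz : ¬ InLattice τ z) :
    HasDerivAt (fun t ↦ wp t z) (wpTau τ z) τ := by
  have h4 := hasDerivAt_wp_line hτ hz 1 0
  have h6 : HasDerivAt (fun x : ℂ ↦ x - τ) 1 τ := (hasDerivAt_id τ).sub_const τ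
  have h7 := HasDerivAt.comp τ (h₂ := fun s ↦ wp (τ + 1 * s) (z + 0 * s)) (h := fun x ↦ x - τ)
        (by simpa using h4) h6
  simpa [Function.comp_def] using h7

lemma wp_add_of_inLattice (hτ : 0 < τ.im) (z : ℂ) {l : ℂ} (hl : InLattice τ l) :
    wp τ (z + l) = wp τ z := by
  rw [wp_eq_weierstrassP hτ]
  exact (tauPair τ hτ).weierstrassP_add_coe z ⟨l, (mem_tauPair_lattice hτ).mpr hl⟩

lemma wpd_add_of_inLattice (hτ : 0 < τ.im) (z : ℂ) {l : ℂ} (hl : InLattice τ l) :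
    wpd τ (z + l) = wpd τ z := by
  rw [wpd_eq_derivWeierstrassP hτ]
  exact (tauPair τ hτ).derivWeierstrassP_add_coe z ⟨l, (mem_tauPair_lattice hτ).mpr hl⟩

lemma inLattice_intCast_add_intCast_mul (m n : ℤ) : InLattice τ (m + n * τ) := ⟨m, n, rfl⟩

lemma not_inLattice_add (hτ : 0 < τ.im) {z l : ℂ} (hl : InLattice τ l) (hz : ¬ InLattice τ z) :
    ¬ InLattice τ (z + l) := by
  rw [← mem_tauPair_lattice hτ] at *
  rwa [Submodule.add_mem_iff_left _ hl]

/-- Differentiating `℘(z + m + nτ|τ) = ℘(z|τ)` in `τ`. -/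
lemma wpTau_add (hτ : 0 < τ.im) {z : ℂ} (hz : ¬ InLattice τ z) (m n : ℤ) :
    wpTau τ (z + (m + n * τ)) + n * wpd τ z = wpTau τ z := by
  have hl := inLattice_intCast_add_intCast_mul (τ := τ) m n
  have h1 := hasDerivAt_wp_line hτ (not_inLattice_add hτ hl hz) 1 n
  have h2 := hasDerivAt_wp_line hτ hz 1 0
  rw [wpd_add_of_inLattice hτ z hl] at h1
  have hev : ∀ᶠ s : ℂ in 𝓝 0, 0 < (τ + 1 * s).im := by
    have : ContinuousAt (fun s : ℂ ↦ (τ + 1 * s).im) 0 := by fun_prop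
    exact this.tendsto.eventually_const_lt (by simpa using hτ)
  have h3 := h2.congr_of_eventuallyEq (f₁ := fun s ↦ wp (τ + 1 * s) (z + (m + n * τ) + n * s)) <| by
    filter_upwards [hev] with s hs
    have := wp_add_of_inLattice hs z (inLattice_intCast_add_intCast_mul m n)
    rw [zero_mul, add_zero, ← this]
    ring_nf
  have := h1.unique h3
  simpa using this

lemma differentiableAt_wpTau (hτ : 0 < τ.im) {z₀ : ℂ}
    (hz₀ : ∀ w : ℤ × ℤ, w ≠ 0 → z₀ ≠ latticePt τ w) : DifferentiableAt ℂ (wpTau τ) z₀ := by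
  obtain ⟨u, hu, hev⟩ := exists_summable_bound_wpTerm hτ hz₀
  obtain ⟨ρ, hρ, hball⟩ := Metric.eventually_nhds_iff_ball.mp hev
  have hb (t : ℂ) (ht : t ∈ Metric.ball τ ρ) (z : ℂ) (hz : z ∈ Metric.ball z₀ ρ) :=
    hball (t, z) (by rw [← ball_prod_same]; exact ⟨ht, hz⟩)
  have hτρ : τ ∈ Metric.ball τ ρ := Metric.mem_ball_self hρ
  have hderiv (t : ℂ) (ht : t ∈ Metric.ball τ ρ) (z : ℂ) (hz : z ∈ Metric.ball z₀ ρ)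
      (w : {w : ℤ × ℤ // w ≠ 0}) : HasDerivAt (fun t ↦ wpTerm t z w) (wpTermTau t z w) t := by
    have h1 := (hb t ht z hz w)
    have h4 := hasDerivAt_wpTerm_line (τ := t) (z₀ := z) (w := w) (a := 1) (b := 0) (s := 0)
      (by simpa using h1.1) (by simpa using h1.2.1)
    have h6 : HasDerivAt (fun x : ℂ ↦ x - t) 1 t := (hasDerivAt_id t).sub_const t
    have h7 := HasDerivAt.comp t (h₂ := fun s ↦ wpTerm (t + 1 * s) (z + 0 * s) w)
      (h := fun x ↦ x - t) (by simpa using h4) h6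
    simpa [Function.comp_def] using h7
  have hdiff : DifferentiableOn ℂ (wpTau τ) (Metric.ball z₀ ρ) := by
    refine Complex.differentiableOn_tsum_of_summable_norm (hu.div_const (ρ / 2))
      (fun w z hz ↦ ?_) Metric.isOpen_ball (fun w z hz ↦ ?_)
    · have h1 := (hb τ hτρ z hz w)
      have h2 : z - latticePt τ w ≠ 0 := sub_ne_zero.mpr h1.1
      unfold wpTermTau
      refine DifferentiableAt.differentiableWithinAt ?_
      fun_prop (disch := assumption)
    · rw [← (hderiv τ hτρ z hz w).deriv]
      have hsub : Metric.closedBall τ (ρ / 2) ⊆ Metric.ball τ ρ :=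
        Metric.closedBall_subset_ball (by linarith)
      refine Complex.norm_deriv_le_of_forall_mem_sphere_norm_le (by positivity)
        (DifferentiableOn.diffContOnCl fun t ht ↦ ?_) fun t ht ↦ ?_
      · exact (hderiv t (hsub (Metric.closure_ball_subset_closedBall ht)) z hz
          w).differentiableAt.differentiableWithinAt
      · exact (hb t (hsub (Metric.sphere_subset_closedBall ht)) z hz w).2.2
  exact hdiff.differentiableAt (Metric.ball_mem_nhds z₀ hρ)

lemma wpTau_zero (τ : ℂ) : wpTau τ 0 = 0 := by
  refine (tsum_congr fun w ↦ ?_).trans tsum_zero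
  rw [wpTermTau, zero_sub, inv_neg]
  ring

lemma tendsto_wpTau_zero (hτ : 0 < τ.im) : Tendsto (wpTau τ) (𝓝[≠] 0) (𝓝 0) := by
  have := (differentiableAt_wpTau hτ fun w hw ↦ (latticePt_ne_zero hτ hw).symm).continuousAt
  rw [ContinuousAt, wpTau_zero] at this
  exact this.mono_left nhdsWithin_le_nhds

end

namespace PeriodPair

/-- `ζ` is the Weierstrass zeta function of the period pair `L`. -/
structure IsZeta (L : PeriodPair) (ζ : ℂ → ℂ) : Prop where
  neg : ∀ z, ζ (-z) = -ζ z
  hasDerivAt : ∀ z ∉ L.lattice, HasDerivAt ζ (-℘[L] z) z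
  tendsto : Tendsto (fun z ↦ ζ z - z⁻¹) (𝓝[≠] 0) (𝓝 0)

variable {L : PeriodPair} {ζ : ℂ → ℂ}

lemma tendsto_derivWeierstrassPExcept_div :
    Tendsto (fun z ↦ ℘'[L - (0 : ℂ)] z / z) (𝓝[≠] 0) (𝓝 (6 * L.G 4)) := by
  have h := (L.analyticAt_derivWeierstrassPExcept 0).differentiableAt.hasDerivAt
  rw [L.deriv_derivWeierstrassPExcept_self, L.sumInvPow_zero, hasDerivAt_iff_tendsto_slope] at h
  refine h.congr fun z ↦ ?_
  simp [slope_def_field]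

/-- The regular part of `℘` at `0` is `z² A(z)` with `A(0) = 3 G₄`. -/
lemma exists_weierstrassPExcept_eq_sq_mul :
    ∃ A : ℂ → ℂ, AnalyticAt ℂ A 0 ∧ A 0 = 3 * L.G 4 ∧
      ∀ᶠ z in 𝓝 0, ℘[L - (0 : ℂ)] z = z ^ 2 * A z := by
  obtain ⟨A, hA, hev⟩ := exists_pow_mul_of_analyticAt (L.analyticAt_weierstrassPExcept 0)
    (by simp) (by simp)
  simp only [sub_zero] at hev
  refine ⟨A, hA, ?_, hev⟩
  have h1 : Tendsto (fun z ↦ 2 * A z + z * deriv A z) (𝓝[≠] 0) (𝓝 (2 * A 0)) := by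
    have : ContinuousAt (fun z ↦ 2 * A z + z * deriv A z) 0 :=
      (continuousAt_const.mul hA.continuousAt).add (continuousAt_id.mul hA.deriv.continuousAt)
    simpa using this.tendsto.mono_left nhdsWithin_le_nhds
  have h2 : Tendsto (fun z ↦ 2 * A z + z * deriv A z) (𝓝[≠] 0) (𝓝 (6 * L.G 4)) := by
    refine tendsto_derivWeierstrassPExcept_div.congr' ?_
    filter_upwards [self_mem_nhdsWithin, mem_nhdsWithin_of_mem_nhds hev.eventually_nhds,
      mem_nhdsWithin_of_mem_nhds hA.eventually_analyticAt,
      mem_nhdsWithin_of_mem_nhds (L.compl_lattice_sdiff_singleton_mem_nhds 0)] with z hz h3 h4 h5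
    rw [← L.eqOn_deriv_weierstrassPExcept_derivWeierstrassPExcept 0 h5,
      EventuallyEq.deriv_eq h3,
      ((hasDerivAt_pow 2 z).fun_mul h4.differentiableAt.hasDerivAt).deriv, div_eq_iff hz]
    push_cast
    ring
  linear_combination (1 / 2) * tendsto_nhds_unique h1 h2

namespace IsZeta

lemma zero (h : L.IsZeta ζ) : ζ 0 = 0 := by
  have := h.neg 0
  rw [neg_zero] at this
  exact self_eq_neg.mp this

/-- The regular part of `ζ` at `0` has derivative minus the regular part of `℘`. -/
lemma hasDerivAt_sub_inv (h : L.IsZeta ζ) {z : ℂ} (hz : z ∉ (L.lattice : Set ℂ) \ {0}) :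
    HasDerivAt (fun z ↦ ζ z - z⁻¹) (-℘[L - (0 : ℂ)] z) z := by
  have hne (z : ℂ) (hz : z ∉ L.lattice) :
      HasDerivAt (fun z ↦ ζ z - z⁻¹) (-℘[L - (0 : ℂ)] z) z := by
    have hz0 : z ≠ 0 := fun h ↦ hz (h ▸ zero_mem _)
    refine ((h.hasDerivAt z hz).sub (hasDerivAt_inv hz0)).congr_deriv ?_
    rw [L.weierstrassP_eq_inv_sq_add]
    ring
  by_cases hzL : z ∈ L.lattice
  · obtain rfl : z = 0 := by by_contra h'; exact hz ⟨hzL, h'⟩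
    have hc : ContinuousAt (fun z ↦ ζ z - z⁻¹) 0 := by
      rw [continuousAt_iff_punctured_nhds]
      simpa [h.zero] using h.tendsto
    have ha : AnalyticAt ℂ (fun z ↦ ζ z - z⁻¹) 0 :=
      Complex.analyticAt_of_differentiable_on_punctured_nhds_of_continuousAt
        (by filter_upwards [L.eventually_nhdsNE_notMem_lattice 0] with z hz
            exact (hne z hz).differentiableAt) hc
    have h1 := ha.deriv.continuousAt.tendsto.mono_left (nhdsWithin_le_nhds (s := {0}ᶜ))
    have h2 := (L.analyticAt_weierstrassPExcept 0).neg.continuousAt.tendsto.mono_left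
      (nhdsWithin_le_nhds (s := {0}ᶜ))
    have h3 := tendsto_nhds_unique (h1.congr' (by
      filter_upwards [L.eventually_nhdsNE_notMem_lattice 0] with z hz
      exact (hne z hz).deriv)) h2
    exact ha.differentiableAt.hasDerivAt.congr_deriv h3
  · exact hne z hzL

/-- `ζ(z) = 1/z - G₄ z³ + …` -/
lemma tendsto_sub_inv_div_pow (h : L.IsZeta ζ) :
    Tendsto (fun z ↦ (ζ z - z⁻¹) / z ^ 3) (𝓝[≠] 0) (𝓝 (-L.G 4)) := by
  obtain ⟨A, hA, hA0, hev⟩ := L.exists_weierstrassPExcept_eq_sq_mul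
  have hdh : ∀ᶠ z in 𝓝 0, HasDerivAt (fun z ↦ ζ z - z⁻¹) (-℘[L - (0 : ℂ)] z) z := by
    filter_upwards [L.compl_lattice_sdiff_singleton_mem_nhds 0] with z hz
    exact h.hasDerivAt_sub_inv hz
  have ha : AnalyticAt ℂ (fun z ↦ ζ z - z⁻¹) 0 := by
    rw [Complex.analyticAt_iff_eventually_differentiableAt]
    filter_upwards [hdh] with z hz using hz.differentiableAt
  obtain ⟨k, hk, hkev⟩ := exists_pow_mul_of_analyticAt ha (by simp [h.zero])
    (by rw [hdh.self_of_nhds.deriv, weierstrassPExcept_zero, neg_zero])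
  simp only [sub_zero] at hkev
  have hode : ∀ᶠ z in 𝓝[≠] 0, 2 * k z + z * deriv k z = -(z * A z) := by
    filter_upwards [self_mem_nhdsWithin, mem_nhdsWithin_of_mem_nhds hkev.eventually_nhds,
      mem_nhdsWithin_of_mem_nhds hk.eventually_analyticAt,
      mem_nhdsWithin_of_mem_nhds hdh, mem_nhdsWithin_of_mem_nhds hev] with z hz h1 h2 h3 h4
    have h5 := EventuallyEq.deriv_eq h1
    rw [h3.deriv, ((hasDerivAt_pow 2 z).fun_mul h2.differentiableAt.hasDerivAt).deriv, h4] at h5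
    push_cast at h5
    refine mul_left_cancel₀ (show z ≠ 0 from hz) ?_
    linear_combination -h5
  have hk0 : k 0 = 0 := by
    have c1 : ContinuousAt (fun z ↦ 2 * k z + z * deriv k z) 0 :=
      (continuousAt_const.mul hk.continuousAt).add (continuousAt_id.mul hk.deriv.continuousAt)
    have c2 : ContinuousAt (fun z ↦ -(z * A z)) 0 := (continuousAt_id.mul hA.continuousAt).neg
    have := tendsto_nhds_unique
      ((c1.tendsto.mono_left (nhdsWithin_le_nhds (s := {0}ᶜ))).congr' hode)
      (c2.tendsto.mono_left nhdsWithin_le_nhds)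
    simpa using this
  have hslope : Tendsto (fun z ↦ k z / z) (𝓝[≠] 0) (𝓝 (deriv k 0)) := by
    refine (hasDerivAt_iff_tendsto_slope.mp hk.differentiableAt.hasDerivAt).congr fun z ↦ ?_
    rw [slope_def_field, hk0]
    simp
  have hk1 : deriv k 0 = -L.G 4 := by
    have c1 : Tendsto (fun z ↦ 2 * (k z / z) + deriv k z) (𝓝[≠] 0)
        (𝓝 (2 * deriv k 0 + deriv k 0)) :=
      (hslope.const_mul 2).add (hk.deriv.continuousAt.tendsto.mono_left nhdsWithin_le_nhds)
    have c2 : Tendsto (fun z ↦ -A z) (𝓝[≠] 0) (𝓝 (-A 0)) :=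
      hA.continuousAt.neg.tendsto.mono_left nhdsWithin_le_nhds
    have := tendsto_nhds_unique (c1.congr' (by
      filter_upwards [hode, self_mem_nhdsWithin] with z hz hz0
      have hz0 : z ≠ 0 := hz0
      field_simp
      linear_combination hz)) c2
    rw [hA0] at this
    linear_combination (1 / 3) * this
  rw [← hk1]
  refine hslope.congr' ?_
  filter_upwards [mem_nhdsWithin_of_mem_nhds hkev, self_mem_nhdsWithin] with z hz hz0
  have hz0 : z ≠ 0 := hz0
  rw [hz]
  field_simp

/-- The polar parts and constant terms cancel in
`(ζ - η z) ℘' + 2 (℘ - η) ℘ - g₂ / 3` at the origin. -/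
lemma tendsto_heat_rhs (h : L.IsZeta ζ) (η : ℂ) :
    Tendsto (fun z ↦ (ζ z - z * η) * ℘'[L] z + 2 * (℘[L] z - η) * ℘[L] z - L.g₂ / 3)
      (𝓝[≠] 0) (𝓝 0) := by
  obtain ⟨A, hA, hA0, hev⟩ := L.exists_weierstrassPExcept_eq_sq_mul
  have t1 := L.tendsto_derivWeierstrassPExcept_div
  have t2 := h.tendsto_sub_inv_div_pow
  have t3 : Tendsto A (𝓝[≠] 0) (𝓝 (3 * L.G 4)) := by
    rw [← hA0]; exact hA.continuousAt.tendsto.mono_left nhdsWithin_le_nhds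
  have t4 : Tendsto (fun z : ℂ ↦ z) (𝓝[≠] 0) (𝓝 0) := tendsto_id.mono_left nhdsWithin_le_nhds
  have key := ((((((t1.sub (t2.const_mul 2)).add (t3.const_mul 4)).add
    ((h.tendsto.mul t4).mul t1)).sub (((t4.pow 2).mul_const η).mul t1)).add
    ((((t4.pow 2).mul t3).pow 2).const_mul 2)).sub (((t4.pow 2).mul t3).const_mul (2 * η))).sub
    (tendsto_const_nhds (x := L.g₂ / 3))
  have hval : 6 * L.G 4 - 2 * -L.G 4 + 4 * (3 * L.G 4) + 0 * 0 * (6 * L.G 4)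
      - 0 ^ 2 * η * (6 * L.G 4) + 2 * (0 ^ 2 * (3 * L.G 4)) ^ 2 - 2 * η * (0 ^ 2 * (3 * L.G 4))
      - L.g₂ / 3 = 0 := by
    rw [g₂]; ring
  rw [hval] at key
  refine key.congr' ?_
  filter_upwards [mem_nhdsWithin_of_mem_nhds hev, self_mem_nhdsWithin] with z hz hz0
  have hz0 : z ≠ 0 := hz0
  have hd : ℘'[L] z = ℘'[L - (0 : ℂ)] z - 2 / z ^ 3 := by
    have := L.derivWeierstrassPExcept_def 0 z
    simp only [ZeroMemClass.coe_zero, sub_zero] at this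
    rw [this]; ring
  rw [L.weierstrassP_eq_inv_sq_add, hz, hd]
  field_simp
  ring

end IsZeta

end PeriodPair

/-- Integral of `1/z` along a segment avoiding the negative imaginary axis. -/
lemma mul_integral_inv_line (p q : ℂ) (a b : ℝ)
    (h : ∀ t ∈ Set.uIcc a b, 0 < (p + t * q).im ∨ (p + t * q).re ≠ 0) :
    q * ∫ t in a..b, (p + t * q)⁻¹ = log (-I * (p + b * q)) - log (-I * (p + a * q)) := by
  have hne (t) (ht : t ∈ Set.uIcc a b) : p + t * q ≠ 0 := by
    intro h0
    have := h t ht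
    simp [h0] at this
  rw [← intervalIntegral.integral_const_mul]
  refine intervalIntegral.integral_eq_sub_of_hasDerivAt
    (f := fun t : ℝ ↦ log (-I * (p + t * q))) (fun t ht ↦ ?_) ?_
  · have h1 : HasDerivAt (fun t : ℝ ↦ -I * (p + t * q)) (-I * q) t := by
      simpa using (((hasDerivAt_id t).ofReal_comp.mul_const q).const_add p).const_mul (-I)
    refine (h1.clog_real ?_).congr_deriv ?_
    · rw [mem_slitPlane_iff]
      refine (h t ht).imp (fun h' ↦ ?_) fun h' ↦ ?_
      · simpa using h'
      · rw [show (-I * (p + t * q)).im = -(p + t * q).re by simp [add_comm]]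
        exact neg_ne_zero.mpr h'
    · have := hne t ht
      field_simp
  · refine ContinuousOn.intervalIntegrable (continuousOn_const.mul (ContinuousOn.inv₀ ?_ hne))
    fun_prop

section

variable {τ : ℂ} (hτ : 0 < τ.im) {ζ : ℂ → ℂ} {η : ℂ}

lemma notMem_tauPair_lattice_of_im {z : ℂ} (h0 : z.im ≠ 0) (him : |z.im| < τ.im) :
    z ∉ (tauPair τ hτ).lattice := by
  intro hz
  obtain ⟨m, n, rfl⟩ := (mem_tauPair_lattice hτ).mp hz
  have hn : n = 0 := by
    have h1 : |(n : ℝ)| * τ.im < 1 * τ.im := by simpa [abs_mul, abs_of_pos hτ] using him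
    have h2 := lt_of_mul_lt_mul_right h1 hτ.le
    exact Int.abs_lt_one_iff.mp (by exact_mod_cast h2)
  simp [hn] at h0

lemma eq_zero_of_mem_tauPair_lattice {z : ℂ} (hz : z ∈ (tauPair τ hτ).lattice)
    (him : |z.im| < τ.im) (hre : |z.re| < 1) : z = 0 := by
  have h0 : z.im = 0 := by
    by_contra h
    exact notMem_tauPair_lattice_of_im hτ h him hz
  obtain ⟨m, n, rfl⟩ := (mem_tauPair_lattice hτ).mp hz
  obtain rfl : n = 0 := by simpa [hτ.ne'] using h0
  have hm : m = 0 := by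
    have h1 : |(m : ℝ)| < 1 := by simpa using hre
    exact Int.abs_lt_one_iff.mp (by exact_mod_cast h1)
  simp [hm]

/-- The integral of `ζ(z) - zη₁` over a horizontal period half way between two rows of
lattice points. -/
lemma integral_zeta_sub_mul (h : (tauPair τ hτ).IsZeta ζ)
    (hη : ∀ z ∉ (tauPair τ hτ).lattice, ζ (z + 1) = ζ z + η) :
    ∫ x in (-1 / 2 : ℝ)..1 / 2, (ζ (x + (τ.im / 2 : ℝ) * I) - (x + (τ.im / 2 : ℝ) * I) * η)
      = -(Real.pi * I) := by
  set L := tauPair τ hτ with hL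
  set ε : ℝ := τ.im / 2 with hε
  have hε0 : 0 < ε := half_pos hτ
  set g : ℂ → ℂ := fun z ↦ (ζ z - z⁻¹) - z * η with hg
  have hdiff : DifferentiableOn ℂ g (Set.uIcc (-1 / 2) (1 / 2) ×ℂ Set.uIcc 0 ε) := by
    intro z hz
    have hre : |z.re| ≤ 1 / 2 := by
      have := hz.1
      rw [Set.mem_preimage, Set.uIcc_of_le (by norm_num), Set.mem_Icc] at this
      exact abs_le.mpr ⟨by linarith, this.2⟩
    have him : |z.im| ≤ ε := by
      have := hz.2
      rw [Set.mem_preimage, Set.uIcc_of_le hε0.le, Set.mem_Icc] at this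
      exact abs_le.mpr ⟨by linarith, this.2⟩
    have hzL : z ∉ (L.lattice : Set ℂ) \ {0} := fun hz' ↦ hz'.2
      (eq_zero_of_mem_tauPair_lattice hτ hz'.1 (by linarith) (by linarith))
    exact ((h.hasDerivAt_sub_inv hzL).differentiableAt.sub
      (differentiableAt_id.mul_const η)).differentiableWithinAt
  have hrect : (∫ x in (-1 / 2 : ℝ)..1 / 2, g x) - (∫ x in (-1 / 2 : ℝ)..1 / 2, g (x + ε * I))
      + I * (∫ y in (0 : ℝ)..ε, g (1 / 2 + y * I))
      - I * (∫ y in (0 : ℝ)..ε, g (-1 / 2 + y * I)) = 0 := by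
    simpa using Complex.integral_boundary_rect_eq_zero_of_differentiableOn g (-1 / 2 : ℝ)
      ((1 / 2 : ℝ) + ε * I) (by simpa using hdiff)
  have hbot : ∫ x in (-1 / 2 : ℝ)..1 / 2, g x = 0 := by
    have hodd : ∀ x : ℝ, g (-x : ℝ) = -g x := fun x ↦ by
      simp only [hg, ofReal_neg, h.neg, inv_neg]
      ring
    have := intervalIntegral.integral_comp_neg (a := -1 / 2) (b := 1 / 2) fun x : ℝ ↦ g x
    simp only [hodd, intervalIntegral.integral_neg] at this
    norm_num at this ⊢
    exact self_eq_neg.mp this.symm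
  have hcont : Continuous fun x : ℝ ↦ ζ (x + ε * I) - (x + ε * I) * η := by
    rw [continuous_iff_continuousAt]
    intro x
    have hx : (x + ε * I : ℂ) ∉ L.lattice := notMem_tauPair_lattice_of_im hτ
      (by simpa using hε0.ne') (by simpa [abs_of_pos hε0] using (by linarith : ε < τ.im))
    have : ContinuousAt (fun x : ℝ ↦ ζ (x + ε * I)) x :=
      ContinuousAt.comp (g := ζ) (f := fun x : ℝ ↦ (x + ε * I : ℂ))
        (h.hasDerivAt _ hx).continuousAt (by fun_prop)
    exact this.sub (by fun_prop)
  have htop : ∫ x in (-1 / 2 : ℝ)..1 / 2, g (x + ε * I)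
      = (∫ x in (-1 / 2 : ℝ)..1 / 2, (ζ (x + ε * I) - (x + ε * I) * η))
        - ∫ x in (-1 / 2 : ℝ)..1 / 2, (x + ε * I : ℂ)⁻¹ := by
    rw [← intervalIntegral.integral_sub (hcont.intervalIntegrable _ _)]
    · congr 1 with x
      simp only [hg]
      ring
    · refine Continuous.intervalIntegrable (Continuous.inv₀ (by fun_prop) fun x h0 ↦ ?_) _ _
      have := congrArg Complex.im h0
      simp [hε0.ne'] at this
  have hI1 : ∫ x in (-1 / 2 : ℝ)..1 / 2, (x + ε * I : ℂ)⁻¹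
      = log (-I * (1 / 2 + ε * I)) - log (-I * (-1 / 2 + ε * I)) := by
    simpa [add_comm] using mul_integral_inv_line (ε * I) 1 (-1 / 2) (1 / 2) (by simp [hε0])
  have hI2 : I * ∫ y in (0 : ℝ)..ε, (1 / 2 + y * I : ℂ)⁻¹
      = log (-I * (1 / 2 + ε * I)) - log (-I * (1 / 2)) := by
    simpa using mul_integral_inv_line (1 / 2) I 0 ε (by simp)
  have hI3 : I * ∫ y in (0 : ℝ)..ε, (-1 / 2 + y * I : ℂ)⁻¹
      = log (-I * (-1 / 2 + ε * I)) - log (-I * (-1 / 2)) := by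
    simpa using mul_integral_inv_line (-1 / 2) I 0 ε (by norm_num)
  have hside : (∫ y in (0 : ℝ)..ε, g (1 / 2 + y * I)) - ∫ y in (0 : ℝ)..ε, g (-1 / 2 + y * I)
      = (∫ y in (0 : ℝ)..ε, (-1 / 2 + y * I : ℂ)⁻¹) - ∫ y in (0 : ℝ)..ε, (1 / 2 + y * I : ℂ)⁻¹ := by
    have hmem (c : ℝ) (hc : c ∈ Set.uIcc (-1 / 2 : ℝ) (1 / 2)) (y : ℝ) (hy : y ∈ Set.uIcc 0 ε) :
        (c + y * I : ℂ) ∈ Set.uIcc (-1 / 2 : ℝ) (1 / 2) ×ℂ Set.uIcc 0 ε := by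
      rw [mem_reProdIm, show (c + y * I : ℂ).re = c by simp, show (c + y * I : ℂ).im = y by simp]
      exact ⟨hc, hy⟩
    have hgint (c : ℝ) (hc : c ∈ Set.uIcc (-1 / 2 : ℝ) (1 / 2)) :
        IntervalIntegrable (fun y : ℝ ↦ g (c + y * I)) MeasureTheory.volume 0 ε :=
      (hdiff.continuousOn.comp (by fun_prop) (hmem c hc)).intervalIntegrable
    have hinvint (c : ℝ) (hc : c ≠ 0) :
        IntervalIntegrable (fun y : ℝ ↦ (c + y * I : ℂ)⁻¹) MeasureTheory.volume 0 ε := by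
      refine Continuous.intervalIntegrable (Continuous.inv₀ (by fun_prop) fun y h0 ↦ hc ?_) _ _
      simpa using congrArg Complex.re h0
    have g1 := hgint (1 / 2) Set.right_mem_uIcc
    have g2 := hgint (-1 / 2) Set.left_mem_uIcc
    have i1 := hinvint (1 / 2) (by norm_num)
    have i2 := hinvint (-1 / 2) (by norm_num)
    push_cast at g1 g2 i1 i2
    rw [← intervalIntegral.integral_sub g1 g2, ← intervalIntegral.integral_sub i2 i1]
    refine intervalIntegral.integral_congr fun y hy ↦ ?_
    rw [Set.uIcc_of_le hε0.le, Set.mem_Icc] at hy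
    have hnot : (-1 / 2 + y * I : ℂ) ∉ L.lattice := fun hL' ↦ by
      have h0 := eq_zero_of_mem_tauPair_lattice hτ hL'
        (by simpa [abs_of_nonneg hy.1] using (by linarith : y < τ.im)) (by norm_num [abs_lt])
      have := congrArg Complex.re h0
      norm_num at this
    have h1 := hη _ hnot
    rw [show (-1 / 2 + y * I + 1 : ℂ) = 1 / 2 + y * I by ring] at h1
    simp only [hg, h1]
    ring
  have hlog : log (-I * (1 / 2)) - log (-I * (-1 / 2)) = -(Real.pi * I) := by
    have h1 := Complex.log_ofReal_mul (r := 1 / 2) (by norm_num) (x := -I) (by simp)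
    have h2 := Complex.log_ofReal_mul (r := 1 / 2) (by norm_num) (x := I) (by simp)
    rw [show -I * (1 / 2) = ((1 / 2 : ℝ) : ℂ) * -I by push_cast; ring,
      show -I * (-1 / 2) = ((1 / 2 : ℝ) : ℂ) * I by push_cast; ring, h1, h2, log_neg_I, log_I]
    ring
  rw [hbot, htop] at hrect
  linear_combination -hrect + hI1 - hI2 + hI3 + I * hside + hlog

/-- The **Legendre relation** `η₂ - τ η₁ = -2πi`. -/
lemma zeta_add_tau (h : (tauPair τ hτ).IsZeta ζ)
    (hη : ∀ z ∉ (tauPair τ hτ).lattice, ζ (z + 1) = ζ z + η) {z : ℂ}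
    (hz : z ∉ (tauPair τ hτ).lattice) : ζ (z + τ) = ζ z + τ * η - 2 * Real.pi * I := by
  set L := tauPair τ hτ with hL
  have hτL : τ ∈ L.lattice := L.ω₂_mem_lattice
  have hadd {z : ℂ} (hz : z ∉ L.lattice) : z + τ ∉ L.lattice := by
    rwa [Submodule.add_mem_iff_left _ hτL]
  have hder (z : ℂ) (hz : z ∉ L.lattice) : HasDerivAt (fun z ↦ ζ (z + τ) - ζ z) 0 z := by
    have h1 := (h.hasDerivAt _ (hadd hz)).comp_add_const z τ
    refine (h1.sub (h.hasDerivAt z hz)).congr_deriv ?_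
    rw [L.weierstrassP_add_coe z ⟨τ, hτL⟩, sub_self]
  have hconst {z w : ℂ} (hz : z ∉ L.lattice) (hw : w ∉ L.lattice) :
      ζ (z + τ) - ζ z = ζ (w + τ) - ζ w :=
    L.isClosed_lattice.isOpen_compl.is_const_of_deriv_eq_zero L.isPreconnected_compl_lattice
      (f := fun z ↦ ζ (z + τ) - ζ z)
      (fun z hz ↦ (hder z hz).differentiableAt.differentiableWithinAt)
      (fun z hz ↦ (hder z hz).deriv) hz hw
  have hint := integral_zeta_sub_mul hτ h hη
  set ε : ℝ := τ.im / 2 with hε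
  have hε0 : 0 < ε := half_pos hτ
  set H : ℂ → ℂ := fun z ↦ ζ z - z * η with hH
  have hlow (x : ℝ) : (x - ε * I : ℂ) ∉ L.lattice := notMem_tauPair_lattice_of_im hτ
      (by simpa using hε0.ne') (by simpa [abs_of_pos hε0] using (by linarith : ε < τ.im))
  have hHτ (x : ℝ) : H (x + ε * I) = H ((x - τ.re : ℝ) - ε * I) + (ζ (z + τ) - ζ z - τ * η) := by
    have h1 := hconst hz (hlow (x - τ.re))
    have h2 : ((x - τ.re : ℝ) - ε * I + τ : ℂ) = x + ε * I := by
      apply Complex.ext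
      · simp
      · simp [hε]
        ring
    rw [h2] at h1
    have h3 : (x + ε * I : ℂ) = (x - τ.re : ℝ) - ε * I + τ := h2.symm
    simp only [hH]
    rw [h1]
    linear_combination (-η) * h3
  have hneg : ∫ x in (-1 / 2 : ℝ)..1 / 2, H (x - ε * I) = Real.pi * I := by
    have hodd : ∀ x : ℝ, H ((-x : ℝ) + ε * I) = -H (x - ε * I) := fun x ↦ by
      have : ((-x : ℝ) + ε * I : ℂ) = -(x - ε * I) := by push_cast; ring
      simp only [hH, this, h.neg]
      ring
    have := intervalIntegral.integral_comp_neg (a := -1 / 2) (b := 1 / 2)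
      fun x : ℝ ↦ H (x + ε * I)
    simp only [hodd, intervalIntegral.integral_neg] at this
    norm_num at this hint ⊢
    rw [hint] at this
    exact neg_injective this
  have hper : Function.Periodic (fun x : ℝ ↦ H (x - ε * I)) 1 := fun x ↦ by
    have h1 := hη _ (hlow x)
    have h2 : ((x + 1 : ℝ) - ε * I : ℂ) = x - ε * I + 1 := by push_cast; ring
    simp only [hH]
    rw [h2, h1]
    ring
  have hcont : Continuous fun x : ℝ ↦ H (x - ε * I) := by
    rw [continuous_iff_continuousAt]
    intro x
    have : ContinuousAt (fun x : ℝ ↦ ζ (x - ε * I)) x :=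
      ContinuousAt.comp (g := ζ) (f := fun x : ℝ ↦ (x - ε * I : ℂ))
        (h.hasDerivAt _ (hlow x)).continuousAt (by fun_prop)
    exact this.sub (by fun_prop)
  have hshift : ∫ x in (-1 / 2 : ℝ)..1 / 2, H ((x - τ.re : ℝ) - ε * I) = Real.pi * I := by
    rw [← hneg, intervalIntegral.integral_comp_sub_right (fun x : ℝ ↦ H (x - ε * I))]
    have := hper.intervalIntegral_add_eq (-1 / 2 - τ.re) (-1 / 2)
    rw [show (-1 / 2 - τ.re + 1 : ℝ) = 1 / 2 - τ.re by ring,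
      show (-1 / 2 + 1 : ℝ) = 1 / 2 by ring] at this
    exact this
  have htop : ∫ x in (-1 / 2 : ℝ)..1 / 2, H (x + ε * I)
      = Real.pi * I + (ζ (z + τ) - ζ z - τ * η) := by
    simp only [hHτ]
    rw [intervalIntegral.integral_add, hshift]
    · norm_num
    · exact (hcont.comp (continuous_id.sub continuous_const)).intervalIntegrable _ _
    · exact intervalIntegrable_const
  have := hint.symm.trans htop
  linear_combination -this

end

lemma PeriodPair.add_eq_of_forall_period (L : PeriodPair) {f : ℂ → ℂ}
    (h₁ : ∀ z ∉ L.lattice, f (z + L.ω₁) = f z) (h₂ : ∀ z ∉ L.lattice, f (z + L.ω₂) = f z)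
    {z l : ℂ} (hz : z ∉ L.lattice) (hl : l ∈ L.lattice) : f (z + l) = f z := by
  have hmem (x : ℂ) : x ∈ AddSubgroup.closure {L.ω₁, L.ω₂} ↔ x ∈ L.lattice := by
    rw [← Submodule.span_int_eq_addSubgroupClosure]
    rfl
  rw [← hmem] at hl
  induction hl using AddSubgroup.closure_induction generalizing z with
  | mem x hx =>
    rcases hx with rfl | rfl
    exacts [h₁ z hz, h₂ z hz]
  | zero => rw [add_zero]
  | add x y hx _ ihx ihy =>
    rw [hmem] at hx
    rw [← add_assoc, ihy (by rwa [Submodule.add_mem_iff_left _ hx]), ihx hz]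
  | neg x hx ih =>
    rw [hmem] at hx
    have := ih (z := z + -x) (by rwa [Submodule.add_mem_iff_left _ (neg_mem hx)])
    rw [← this, neg_add_cancel_right]

/-- The heat-type equation `2πi ∂℘/∂τ = (ζ - zη₁)℘' + 2(℘ - η₁)℘ - g₂/3`. -/
lemma two_pi_I_mul_wpTau {τ : ℂ} (hτ : 0 < τ.im) {ζ : ℂ → ℂ} {η : ℂ}
    (h : (tauPair τ hτ).IsZeta ζ) (hη : ∀ z ∉ (tauPair τ hτ).lattice, ζ (z + 1) = ζ z + η) {z : ℂ}
    (hz : z ∉ (tauPair τ hτ).lattice) :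
    2 * Real.pi * I * wpTau τ z
      = (ζ z - z * η) * wpd τ z + 2 * (wp τ z - η) * wp τ z - g2 τ / 3 := by
  have hmem {z : ℂ} := mem_tauPair_lattice hτ (z := z)
  have hwp := wp_eq_weierstrassP hτ
  have hwpd := wpd_eq_derivWeierstrassP hτ
  have hopen {z : ℂ} (hz : z ∉ (tauPair τ hτ).lattice) :
      ((tauPair τ hτ).lattice : Set ℂ)ᶜ ∈ 𝓝 z :=
    (tauPair τ hτ).isClosed_lattice.isOpen_compl.mem_nhds hz
  let F : ℂ → ℂ := fun z ↦ 2 * Real.pi * I * wpTau τ z -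
    ((ζ z - z * η) * wpd τ z + 2 * (wp τ z - η) * wp τ z - g2 τ / 3)
  refine sub_eq_zero.mp ((tauPair τ hτ).eq_of_periodic_of_tendsto (f := F)
    (fun z hz l hl ↦ (tauPair τ hτ).add_eq_of_forall_period ?_ ?_ hz hl) (fun z hz ↦ ?_) ?_ hz)
  · intro z hz
    have h1 : InLattice τ 1 := ⟨1, 0, by simp⟩
    have h2 := wpTau_add hτ (mt hmem.mpr hz) 1 0
    simp only [Int.cast_one, Int.cast_zero, zero_mul, add_zero] at h2
    simp only [tauPair, F]
    rw [wp_add_of_inLattice hτ z h1, wpd_add_of_inLattice hτ z h1, hη z hz, h2]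
    ring
  · intro z hz
    have h1 : InLattice τ τ := ⟨0, 1, by simp⟩
    have h2 := wpTau_add hτ (mt hmem.mpr hz) 0 1
    simp only [Int.cast_one, Int.cast_zero, zero_add, one_mul] at h2
    simp only [tauPair, F]
    rw [wp_add_of_inLattice hτ z h1, wpd_add_of_inLattice hτ z h1, zeta_add_tau hτ h hη hz]
    linear_combination 2 * Real.pi * I * h2
  · have d1 := differentiableAt_wpTau hτ
      fun w _ ↦ ne_latticePt_of_not_inLattice (mt hmem.mpr hz) w
    have d2 := (h.hasDerivAt z hz).differentiableAt
    have d3 : DifferentiableAt ℂ (wp τ) z :=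
      hwp ▸ (tauPair τ hτ).differentiableOn_weierstrassP.differentiableAt (hopen hz)
    have d4 : DifferentiableAt ℂ (wpd τ) z :=
      hwpd ▸ (tauPair τ hτ).differentiableOn_derivWeierstrassP.differentiableAt (hopen hz)
    unfold F
    fun_prop
  · have := ((tendsto_wpTau_zero hτ).const_mul (2 * Real.pi * I)).sub (h.tendsto_heat_rhs η)
    simpa [F, hwp, hwpd, g2_eq hτ] using this

/-- Lemma 2.3 (iii): the `τ`-derivative of `℘(z|τ)`. -/
theorem tau_deriv_wp
    (zeta : ℂ → ℂ → ℂ) (eta1 : ℂ → ℂ)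
    (hzeta : IsWeierstrassZeta zeta) (heta1 : IsEta1 zeta eta1) :
    ∀ τ : ℂ, 0 < τ.im → ∀ z : ℂ, ¬ InLattice τ z →
    HasDerivAt (fun t => wp t z)
      ((-Complex.I / (4 * (Real.pi : ℂ))) *
        (2 * (zeta τ z - z * eta1 τ) * wpd τ z
          + 4 * (wp τ z - eta1 τ) * wp τ z - (2 / 3) * g2 τ)) τ := by
  intro τ hτ z hz
  obtain ⟨hneg, hder, hlim⟩ := hzeta τ hτ
  have h : (tauPair τ hτ).IsZeta (zeta τ) :=
    ⟨hneg, fun z hz ↦ wp_eq_weierstrassP hτ ▸ hder z (mt (mem_tauPair_lattice hτ).mpr hz), hlim⟩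
  have hη (z : ℂ) (hz : z ∉ (tauPair τ hτ).lattice) : zeta τ (z + 1) = zeta τ z + eta1 τ := by
    rw [heta1 τ hτ z (mt (mem_tauPair_lattice hτ).mpr hz)]
    ring
  have key := two_pi_I_mul_wpTau hτ h hη (mt (mem_tauPair_lattice hτ).mp hz)
  refine (hasDerivAt_wp_tau hτ hz).congr_deriv ?_
  have hpi : (Real.pi : ℂ) ≠ 0 := by exact_mod_cast Real.pi_ne_zero
  field_simp
  linear_combination (-6 * I) * key + 12 * Real.pi * wpTau τ z * I_sq
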